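/- arXiv:2304.02406 — 2 statements merged into one kernel-verified Lean document; each statement's English description precedes it below -/
import Mathlib

section
/- (Closed-form pairwise jump vector, equal stiffnesses.) Under the hypotheses of the closed-form pairwise jump statement, if additionally C_α = C_β = C, then the unique minimizer of the pairwise interface energy simplifies to a* = −Q_C⁻¹ · ((C[ε_α^B − ε_β^B]) n̂), where Q_C is the acoustic tensor of C, i.e. Q_C a = (C[(a ⊗ n̂)ˢʸᵐ]) n̂; in particular the optimal jump vector is independent of the total strain ε, of the strains ε_i of the other phase-fields, and of the phase-field values φ_α, φ_β. -/
open Matrix BigOperators Finset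

/-- The Frobenius inner product `⟨A, B⟩ = tr (A Bᵀ)`. -/
noncomputable def frob {d : ℕ} (A B : Matrix (Fin d) (Fin d) ℝ) : ℝ := (A * Bᵀ).trace

/-- The symmetric part `Aˢʸᵐ = (A + Aᵀ)/2`. -/
noncomputable def symPart {d : ℕ} (A : Matrix (Fin d) (Fin d) ℝ) :
    Matrix (Fin d) (Fin d) ℝ := (1 / 2 : ℝ) • (A + Aᵀ)

/-- A stiffness tensor: self-adjoint for the Frobenius inner product, `C A = C(Aˢʸᵐ)`
symmetric for every `A`, and positive definite on nonzero symmetric matrices. -/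
def IsStiffness {d : ℕ}
    (C : Matrix (Fin d) (Fin d) ℝ →ₗ[ℝ] Matrix (Fin d) (Fin d) ℝ) : Prop :=
  (∀ A B, frob (C A) B = frob A (C B)) ∧
  (∀ A, C A = C (symPart A)) ∧
  (∀ A, (C A)ᵀ = C A) ∧
  (∀ S : Matrix (Fin d) (Fin d) ℝ, Sᵀ = S → S ≠ 0 → 0 < frob S (C S))

/-- The pairwise interface energy of the two Hooke pairwise phase-field energies,
evaluated at the rank-one connected pairwise strains
`ε_{αβ}(a) = s⁻¹[G − φ_β (a ⊗ n̂)ˢʸᵐ]`, `ε_{βα}(a) = s⁻¹[G + φ_α (a ⊗ n̂)ˢʸᵐ]`. -/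
noncomputable def pairEnergy {d : ℕ}
    (Cα Cβ : Matrix (Fin d) (Fin d) ℝ →ₗ[ℝ] Matrix (Fin d) (Fin d) ℝ)
    (εαB εβB : Matrix (Fin d) (Fin d) ℝ) (φα φβ : ℝ)
    (G : Matrix (Fin d) (Fin d) ℝ) (nh a : Fin d → ℝ) : ℝ :=
  (φα / (φα + φβ)) * ((1 / 2) *
      frob ((φα + φβ)⁻¹ • (G - φβ • symPart (vecMulVec a nh)) - εαB)
        (Cα ((φα + φβ)⁻¹ • (G - φβ • symPart (vecMulVec a nh)) - εαB)))
    + (φβ / (φα + φβ)) * ((1 / 2) *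
      frob ((φα + φβ)⁻¹ • (G + φα • symPart (vecMulVec a nh)) - εβB)
        (Cβ ((φα + φβ)⁻¹ • (G + φα • symPart (vecMulVec a nh)) - εβB)))

section helpers

variable {d : ℕ}

lemma frob_add_left (A B X : Matrix (Fin d) (Fin d) ℝ) :
    frob (A + B) X = frob A X + frob B X := by
  simp [frob, Matrix.add_mul]

lemma frob_sub_left (A B X : Matrix (Fin d) (Fin d) ℝ) :
    frob (A - B) X = frob A X - frob B X := by
  simp [frob, Matrix.sub_mul]

lemma frob_smul_left (r : ℝ) (A X : Matrix (Fin d) (Fin d) ℝ) :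
    frob (r • A) X = r * frob A X := by
  simp [frob]

lemma frob_comm' (A B : Matrix (Fin d) (Fin d) ℝ) : frob A B = frob B A := by
  unfold frob
  rw [← Matrix.trace_transpose, Matrix.transpose_mul, Matrix.transpose_transpose]

lemma frob_add_right (A B X : Matrix (Fin d) (Fin d) ℝ) :
    frob X (A + B) = frob X A + frob X B := by
  simp [frob, Matrix.mul_add]

lemma frob_sub_right (A B X : Matrix (Fin d) (Fin d) ℝ) :
    frob X (A - B) = frob X A - frob X B := by
  simp [frob, Matrix.mul_sub]

lemma frob_smul_right (r : ℝ) (A X : Matrix (Fin d) (Fin d) ℝ) :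
    frob X (r • A) = r * frob X A := by
  simp [frob]

lemma symPart_add' (A B : Matrix (Fin d) (Fin d) ℝ) :
    symPart (A + B) = symPart A + symPart B := by
  ext i j; simp [symPart]; ring

lemma symPart_sub' (A B : Matrix (Fin d) (Fin d) ℝ) :
    symPart (A - B) = symPart A - symPart B := by
  ext i j; simp [symPart]; ring

lemma symPart_smul' (r : ℝ) (A : Matrix (Fin d) (Fin d) ℝ) :
    symPart (r • A) = r • symPart A := by
  ext i j; simp [symPart]; ring

lemma symPart_transpose (A : Matrix (Fin d) (Fin d) ℝ) : (symPart A)ᵀ = symPart A := by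
  ext i j; simp [symPart]; ring

lemma frob_symPart_vec (c n : Fin d → ℝ) (Y : Matrix (Fin d) (Fin d) ℝ) (hY : Yᵀ = Y) :
    frob (symPart (vecMulVec c n)) Y = c ⬝ᵥ Y.mulVec n := by
  have h1 : frob (vecMulVec c n) Y = c ⬝ᵥ Y.mulVec n := by
    unfold frob
    rw [Matrix.vecMulVec_mul, Matrix.trace_vecMulVec, Matrix.vecMul_transpose]
  have h2 : frob (vecMulVec c n)ᵀ Y = frob (vecMulVec c n) Y := by
    unfold frob
    rw [← Matrix.trace_transpose, Matrix.transpose_mul, Matrix.transpose_transpose,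
      Matrix.transpose_transpose, Matrix.trace_mul_comm, hY]
  rw [symPart, frob_smul_left, frob_add_left, h2, h1]
  ring

lemma symPart_vec_eq_zero (c n : Fin d → ℝ) (hn : n ⬝ᵥ n = 1)
    (h : symPart (vecMulVec c n) = 0) : c = 0 := by
  have e : ∀ i j, c i * n j + c j * n i = 0 := by
    intro i j
    have := congrFun (congrFun h i) j
    simp [symPart, vecMulVec_apply] at this
    linarith
  have e1 : ∀ i, c i + (c ⬝ᵥ n) * n i = 0 := by
    intro i
    have : ∑ j, (c i * n j + c j * n i) * n j = 0 :=
      Finset.sum_eq_zero fun j _ => by rw [e i j, zero_mul]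
    have h2 : ∑ j, (c i * n j + c j * n i) * n j = c i * (n ⬝ᵥ n) + (c ⬝ᵥ n) * n i := by
      simp only [dotProduct, Finset.mul_sum, Finset.sum_mul, ← Finset.sum_add_distrib]
      exact Finset.sum_congr rfl fun j _ => by ring
    rw [h2, hn] at this
    linarith
  have e2 : c ⬝ᵥ n = 0 := by
    have : ∑ i, (c i + (c ⬝ᵥ n) * n i) * n i = 0 :=
      Finset.sum_eq_zero fun j _ => by rw [e1 j, zero_mul]
    have h2 : ∑ i, (c i + (c ⬝ᵥ n) * n i) * n i = c ⬝ᵥ n + (c ⬝ᵥ n) * (n ⬝ᵥ n) := by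
      conv_rhs => rw [dotProduct.eq_1 n n, Finset.mul_sum]
      conv_rhs => enter [1]; rw [dotProduct]
      rw [← Finset.sum_add_distrib]
      exact Finset.sum_congr rfl fun j _ => by ring
    rw [h2, hn] at this
    linarith
  ext i
  have := e1 i
  rw [e2] at this
  simpa using this

/-- The acoustic tensor as a linear map. -/
noncomputable def acoustic (C : Matrix (Fin d) (Fin d) ℝ →ₗ[ℝ] Matrix (Fin d) (Fin d) ℝ)
    (n : Fin d → ℝ) : (Fin d → ℝ) →ₗ[ℝ] (Fin d → ℝ) where
  toFun a := (C (symPart (vecMulVec a n))).mulVec n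
  map_add' a b := by
    rw [Matrix.add_vecMulVec, symPart_add', map_add, Matrix.add_mulVec]
  map_smul' r a := by
    rw [Matrix.smul_vecMulVec, symPart_smul', map_smul, Matrix.smul_mulVec, RingHom.id_apply]

lemma quad_pos (C : Matrix (Fin d) (Fin d) ℝ →ₗ[ℝ] Matrix (Fin d) (Fin d) ℝ)
    (hC : IsStiffness C) (n : Fin d → ℝ) (hn : n ⬝ᵥ n = 1) (c : Fin d → ℝ) (hc : c ≠ 0) :
    0 < frob (symPart (vecMulVec c n)) (C (symPart (vecMulVec c n))) :=
  hC.2.2.2 _ (symPart_transpose _) fun h => hc (symPart_vec_eq_zero c n hn h)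

lemma acoustic_surj (C : Matrix (Fin d) (Fin d) ℝ →ₗ[ℝ] Matrix (Fin d) (Fin d) ℝ)
    (hC : IsStiffness C) (n : Fin d → ℝ) (hn : n ⬝ᵥ n = 1) :
    Function.Surjective (acoustic C n) := by
  rw [← LinearMap.injective_iff_surjective]
  rw [injective_iff_map_eq_zero]
  intro c h
  by_contra hc
  have h1 := quad_pos C hC n hn c hc
  rw [frob_symPart_vec c n _ (hC.2.2.1 _)] at h1
  have h2 : (C (symPart (vecMulVec c n))).mulVec n = 0 := h
  rw [h2, dotProduct_zero] at h1
  exact lt_irrefl _ h1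

lemma pairEnergy_diff (C : Matrix (Fin d) (Fin d) ℝ →ₗ[ℝ] Matrix (Fin d) (Fin d) ℝ)
    (hC : IsStiffness C) (P R : Matrix (Fin d) (Fin d) ℝ) (x y : ℝ) (hx : 0 < x) (hy : 0 < y)
    (G : Matrix (Fin d) (Fin d) ℝ) (n a b : Fin d → ℝ)
    (ha : (C (symPart (vecMulVec a n))).mulVec n = -((C (P - R)).mulVec n)) :
    pairEnergy C C P R x y G n b = pairEnergy C C P R x y G n a +
      x * y / (x + y) ^ 2 * (1 / 2) *
        frob (symPart (vecMulVec (b - a) n)) (C (symPart (vecMulVec (b - a) n))) := by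
  have hs : ∀ A B, frob A (C B) = frob B (C A) := fun A B => by
    rw [← hC.1, frob_comm']
  have h0 : frob (symPart (vecMulVec (b - a) n))
      (C (symPart (vecMulVec a n) + (P - R))) = 0 := by
    rw [frob_symPart_vec _ _ _ (hC.2.2.1 _), map_add, Matrix.add_mulVec, ha]
    simp
  rw [Matrix.sub_vecMulVec, symPart_sub'] at h0 ⊢
  unfold pairEnergy
  generalize symPart (vecMulVec a n) = A at *
  generalize symPart (vecMulVec b n) = B at *
  have hxy : x + y ≠ 0 := by positivity
  simp only [map_add, map_sub, map_smul, frob_add_left, frob_sub_left, frob_smul_left,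
    frob_add_right, frob_sub_right, frob_smul_right] at h0 ⊢
  rw [hs B A, hs B P, hs B R, hs A P, hs A R] at h0
  rw [hs B A, hs B P, hs B R, hs A P, hs A R, hs G P, hs G R, hs G A, hs G B]
  field_simp
  linear_combination (2 * x * y * (x + y)) * h0

end helpers

/-- closed-form pairwise jump vector, equal stiffnesses: if
`C_α = C_β = C`, the unique minimizer of the pairwise interface energy is
`a* = −Q_C⁻¹ ((C[ε_α^B − ε_β^B]) n̂)` with `Q_C` the acoustic tensor of `C`; in particular
the same vector `a*` is the unique global minimizer for every admissible total strain `ε`,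
strains `ε_i` of the other phase-fields, and phase-field values `φ`. -/
theorem closed_form_pairwise_jump_vector_equal_stiffness {d : ℕ}
    (C : Matrix (Fin d) (Fin d) ℝ →ₗ[ℝ] Matrix (Fin d) (Fin d) ℝ) (hC : IsStiffness C)
    (εαB εβB : Matrix (Fin d) (Fin d) ℝ) (hεαB : εαBᵀ = εαB) (hεβB : εβBᵀ = εβB)
    (nh : Fin d → ℝ) (hnh : nh ⬝ᵥ nh = 1) :
    ∃ astar : Fin d → ℝ,
      (C (symPart (vecMulVec astar nh))).mulVec nh = -((C (εαB - εβB)).mulVec nh)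
        ∧ ∀ (n : ℕ), 2 ≤ n → ∀ (α β : Fin n), α ≠ β →
            ∀ (φ : Fin n → ℝ), (∀ i, 0 ≤ φ i) → (∑ i, φ i) = 1 →
              0 < φ α → 0 < φ β →
            ∀ (ε : Matrix (Fin d) (Fin d) ℝ), εᵀ = ε →
            ∀ (εo : Fin n → Matrix (Fin d) (Fin d) ℝ), (∀ i, (εo i)ᵀ = εo i) →
              (∀ b, pairEnergy C C εαB εβB (φ α) (φ β)
                    (ε - ∑ i ∈ univ \ {α, β}, φ i • εo i) nh astar
                  ≤ pairEnergy C C εαB εβB (φ α) (φ β)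
                    (ε - ∑ i ∈ univ \ {α, β}, φ i • εo i) nh b)
              ∧ (∀ a, (∀ b, pairEnergy C C εαB εβB (φ α) (φ β)
                      (ε - ∑ i ∈ univ \ {α, β}, φ i • εo i) nh a
                    ≤ pairEnergy C C εαB εβB (φ α) (φ β)
                      (ε - ∑ i ∈ univ \ {α, β}, φ i • εo i) nh b) → a = astar) := by
  obtain ⟨a, ha⟩ := acoustic_surj C hC nh hnh (-((C (εαB - εβB)).mulVec nh))
  have ha' : (C (symPart (vecMulVec a nh))).mulVec nh = -((C (εαB - εβB)).mulVec nh) := ha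
  refine ⟨a, ha', ?_⟩
  intro n _ α β _ φ _ _ hα hβ ε _ εo _
  generalize ε - ∑ i ∈ univ \ {α, β}, φ i • εo i = G
  have key := fun b => pairEnergy_diff C hC εαB εβB (φ α) (φ β) hα hβ G nh a b ha'
  have hk : 0 < φ α * φ β / (φ α + φ β) ^ 2 * (1 / 2) := by positivity
  have hlt : ∀ b, b ≠ a → pairEnergy C C εαB εβB (φ α) (φ β) G nh a
      < pairEnergy C C εαB εβB (φ α) (φ β) G nh b := by
    intro b hb
    rw [key b]
    have := mul_pos hk (quad_pos C hC nh hnh (b - a) (sub_ne_zero.mpr hb))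
    linarith
  refine ⟨fun b => ?_, fun b hb => ?_⟩
  · by_cases h : b = a
    · rw [h]
    · exact (hlt b h).le
  · by_contra h
    exact absurd (hb a) (not_le.mpr (hlt b h))
end

section
/- (The stationarity of the pairwise interface energy is equivalent to both jump conditions for Hooke materials.) Fix φ_α, φ_β > 0 with s = φ_α + φ_β, a symmetric d×d matrix G, a unit vector n̂ ∈ ℝ^d, stiffness tensors C_α, C_β and symmetric Bain strains ε_α^B, ε_β^B. For a ∈ ℝ^d set ε_{αβ}(a) = s⁻¹[G − φ_β (a ⊗ n̂)ˢʸᵐ], ε_{βα}(a) = s⁻¹[G + φ_α (a ⊗ n̂)ˢʸᵐ], σ_{αβ}(a) = C_α(ε_{αβ}(a) − ε_α^B), σ_{βα}(a) = C_β(ε_{βα}(a) − ε_β^B), and E(a) = (φ_α/s)·½⟨ε_{αβ}(a) − ε_α^B, σ_{αβ}(a)⟩ + (φ_β/s)·½⟨ε_{βα}(a) − ε_β^B, σ_{βα}(a)⟩. Then a vector a minimizes E if and only if σ_{αβ}(a) n̂ = σ_{βα}(a) n̂; and for every a, the pair (ε_{αβ}(a), ε_{βα}(a)) automatically satisfies the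 kinematic compatibility (Hadamard) condition ε_{βα}(a) − ε_{αβ}(a) = (a ⊗ n̂)ˢʸᵐ together with the average constraint φ_α ε_{αβ}(a) + φ_β ε_{βα}(a) = G. Thus partial rank-one relaxation of the pairwise energy satisfies simultaneously the static equilibrium and kinematic compatibility conditions on the pairwise interface. -/
open Matrix

/-- The pairwise phase-field strain `ε_{αβ}(a) = s⁻¹[G − φ_β (a ⊗ n̂)ˢʸᵐ]`. -/
noncomputable def strainAB {d : ℕ} (φα φβ : ℝ) (G : Matrix (Fin d) (Fin d) ℝ)
    (nh a : Fin d → ℝ) : Matrix (Fin d) (Fin d) ℝ :=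
  (φα + φβ)⁻¹ • (G - φβ • symPart (vecMulVec a nh))

/-- The pairwise phase-field strain `ε_{βα}(a) = s⁻¹[G + φ_α (a ⊗ n̂)ˢʸᵐ]`. -/
noncomputable def strainBA {d : ℕ} (φα φβ : ℝ) (G : Matrix (Fin d) (Fin d) ℝ)
    (nh a : Fin d → ℝ) : Matrix (Fin d) (Fin d) ℝ :=
  (φα + φβ)⁻¹ • (G + φα • symPart (vecMulVec a nh))

/-- The pairwise interface energy
`E(a) = (φ_α/s)·½⟨ε_{αβ}(a) − ε_α^B, σ_{αβ}(a)⟩ + (φ_β/s)·½⟨ε_{βα}(a) − ε_β^B, σ_{βα}(a)⟩`. -/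
noncomputable def pairE {d : ℕ}
    (Cα Cβ : Matrix (Fin d) (Fin d) ℝ →ₗ[ℝ] Matrix (Fin d) (Fin d) ℝ)
    (εαB εβB : Matrix (Fin d) (Fin d) ℝ) (φα φβ : ℝ)
    (G : Matrix (Fin d) (Fin d) ℝ) (nh a : Fin d → ℝ) : ℝ :=
  (φα / (φα + φβ)) * ((1 / 2) *
      frob (strainAB φα φβ G nh a - εαB) (Cα (strainAB φα φβ G nh a - εαB)))
    + (φβ / (φα + φβ)) * ((1 / 2) *
      frob (strainBA φα φβ G nh a - εβB) (Cβ (strainBA φα φβ G nh a - εβB)))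


lemma aux_frob_add_left {d : ℕ} (A B C : Matrix (Fin d) (Fin d) ℝ) :
    frob (A + B) C = frob A C + frob B C := by
  simp [frob, add_mul]

lemma aux_frob_smul_left {d : ℕ} (t : ℝ) (A C : Matrix (Fin d) (Fin d) ℝ) :
    frob (t • A) C = t * frob A C := by
  simp [frob]

lemma aux_frob_comm {d : ℕ} (A B : Matrix (Fin d) (Fin d) ℝ) :
    frob A B = frob B A := by
  unfold frob
  rw [← Matrix.trace_transpose, Matrix.transpose_mul, Matrix.transpose_transpose]

/-- Quadratic expansion of the elastic energy. -/
lemma aux_expand {d : ℕ} (C : Matrix (Fin d) (Fin d) ℝ →ₗ[ℝ] Matrix (Fin d) (Fin d) ℝ)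
    (hC : IsStiffness C) (X W : Matrix (Fin d) (Fin d) ℝ) (t : ℝ) :
    frob (X + t • W) (C (X + t • W))
      = frob X (C X) + 2 * t * frob W (C X) + t ^ 2 * frob W (C W) := by
  have h1 : frob X (C W) = frob W (C X) := by
    rw [← hC.1 X W, aux_frob_comm]
  have h2 : ∀ Y, frob Y (C X + t • C W) = frob Y (C X) + t * frob Y (C W) := by
    intro Y
    rw [aux_frob_comm, aux_frob_add_left, aux_frob_smul_left, aux_frob_comm (C X),
      aux_frob_comm (C W)]
  rw [map_add, map_smul, aux_frob_add_left, aux_frob_smul_left, h2, h2, h1]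
  ring

lemma aux_nonneg {d : ℕ} (C : Matrix (Fin d) (Fin d) ℝ →ₗ[ℝ] Matrix (Fin d) (Fin d) ℝ)
    (hC : IsStiffness C) (S : Matrix (Fin d) (Fin d) ℝ) (hS : Sᵀ = S) :
    0 ≤ frob S (C S) := by
  by_cases h : S = 0
  · subst h; simp [frob]
  · exact (hC.2.2.2 S hS h).le

lemma aux_symPart_symm {d : ℕ} (A : Matrix (Fin d) (Fin d) ℝ) :
    (symPart A)ᵀ = symPart A := by
  simp [symPart, add_comm]

lemma aux_frob_vec {d : ℕ} (h n : Fin d → ℝ) (S : Matrix (Fin d) (Fin d) ℝ) :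
    frob (vecMulVec h n) S = h ⬝ᵥ S.mulVec n := by
  simp only [frob, Matrix.trace, Matrix.diag, Matrix.mul_apply, vecMulVec_apply,
    Matrix.transpose_apply, dotProduct, Matrix.mulVec, Finset.mul_sum]
  refine Finset.sum_congr rfl fun i _ => Finset.sum_congr rfl fun j _ => ?_
  ring

lemma aux_frob_sym {d : ℕ} (h n : Fin d → ℝ) (S : Matrix (Fin d) (Fin d) ℝ) (hS : Sᵀ = S) :
    frob (symPart (vecMulVec h n)) S = h ⬝ᵥ S.mulVec n := by
  have h1 : frob (vecMulVec h n)ᵀ S = frob (vecMulVec h n) S := by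
    unfold frob
    rw [← Matrix.trace_transpose, Matrix.transpose_mul, Matrix.transpose_transpose,
      Matrix.transpose_transpose, Matrix.trace_mul_comm, hS]
  rw [symPart, aux_frob_smul_left, aux_frob_add_left, h1, aux_frob_vec]
  ring

lemma aux_symPart_lin {d : ℕ} (a h n : Fin d → ℝ) (t : ℝ) :
    symPart (vecMulVec (a + t • h) n)
      = symPart (vecMulVec a n) + t • symPart (vecMulVec h n) := by
  ext i j
  simp [symPart, vecMulVec_apply]
  ring

lemma aux_energy {d : ℕ}
    (φα φβ : ℝ) (hφα : 0 < φα) (hφβ : 0 < φβ)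
    (G : Matrix (Fin d) (Fin d) ℝ) (nh : Fin d → ℝ)
    (Cα Cβ : Matrix (Fin d) (Fin d) ℝ →ₗ[ℝ] Matrix (Fin d) (Fin d) ℝ)
    (hCα : IsStiffness Cα) (hCβ : IsStiffness Cβ)
    (εαB εβB : Matrix (Fin d) (Fin d) ℝ) (a h : Fin d → ℝ) :
    ∃ k Q : ℝ, 0 < k ∧ 0 ≤ Q ∧ ∀ t : ℝ,
      pairE Cα Cβ εαB εβB φα φβ G nh (a + t • h) = pairE Cα Cβ εαB εβB φα φβ G nh a
        + t * k * (h ⬝ᵥ ((Cβ (strainBA φα φβ G nh a - εβB)).mulVec nh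
          - (Cα (strainAB φα φβ G nh a - εαB)).mulVec nh)) + t ^ 2 * Q := by
  have hs : 0 < φα + φβ := by positivity
  set W := symPart (vecMulVec h nh) with hW
  have hA := aux_nonneg Cα hCα W (aux_symPart_symm _)
  have hB := aux_nonneg Cβ hCβ W (aux_symPart_symm _)
  refine ⟨(φα / (φα + φβ)) * (φβ / (φα + φβ)),
    (φα / (φα + φβ)) * (1 / 2 * ((φβ / (φα + φβ)) ^ 2 * frob W (Cα W)))
    + (φβ / (φα + φβ)) * (1 / 2 * ((φα / (φα + φβ)) ^ 2 * frob W (Cβ W))),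
    by positivity, by positivity, fun t => ?_⟩
  have e1 : strainAB φα φβ G nh (a + t • h) - εαB
      = (strainAB φα φβ G nh a - εαB) + (-(t * φβ / (φα + φβ))) • W := by
    ext i j
    simp only [strainAB, aux_symPart_lin, ← hW, Matrix.sub_apply, Matrix.add_apply,
      Matrix.smul_apply, smul_eq_mul]
    ring
  have e2 : strainBA φα φβ G nh (a + t • h) - εβB
      = (strainBA φα φβ G nh a - εβB) + (t * φα / (φα + φβ)) • W := by
    ext i j
    simp only [strainBA, aux_symPart_lin, ← hW, Matrix.sub_apply, Matrix.add_apply,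
      Matrix.smul_apply, smul_eq_mul]
    ring
  unfold pairE
  rw [e1, e2, aux_expand Cα hCα, aux_expand Cβ hCβ, dotProduct_sub,
    ← aux_frob_sym h nh _ (hCα.2.2.1 _), ← aux_frob_sym h nh _ (hCβ.2.2.1 _), ← hW]
  ring

/-- stationarity of the pairwise interface energy is equivalent to both jump
conditions for Hooke materials: `a` minimizes `E` iff `σ_{αβ}(a) n̂ = σ_{βα}(a) n̂`
(static equilibrium), and for every `a` the pairwise strains automatically satisfy the
Hadamard condition `ε_{βα}(a) − ε_{αβ}(a) = (a ⊗ n̂)ˢʸᵐ` and the average constraint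
`φ_α ε_{αβ}(a) + φ_β ε_{βα}(a) = G`. -/
theorem pairwise_relaxation_satisfies_both_jump_conditions {d : ℕ}
    (φα φβ : ℝ) (hφα : 0 < φα) (hφβ : 0 < φβ)
    (G : Matrix (Fin d) (Fin d) ℝ) (hG : Gᵀ = G)
    (nh : Fin d → ℝ) (hnh : nh ⬝ᵥ nh = 1)
    (Cα Cβ : Matrix (Fin d) (Fin d) ℝ →ₗ[ℝ] Matrix (Fin d) (Fin d) ℝ)
    (hCα : IsStiffness Cα) (hCβ : IsStiffness Cβ)
    (εαB εβB : Matrix (Fin d) (Fin d) ℝ) (hεαB : εαBᵀ = εαB) (hεβB : εβBᵀ = εβB) :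
    (∀ a : Fin d → ℝ,
      (∀ b, pairE Cα Cβ εαB εβB φα φβ G nh a ≤ pairE Cα Cβ εαB εβB φα φβ G nh b) ↔
        (Cα (strainAB φα φβ G nh a - εαB)).mulVec nh
          = (Cβ (strainBA φα φβ G nh a - εβB)).mulVec nh) ∧
    (∀ a : Fin d → ℝ,
      strainBA φα φβ G nh a - strainAB φα φβ G nh a = symPart (vecMulVec a nh)) ∧
    (∀ a : Fin d → ℝ,
      φα • strainAB φα φβ G nh a + φβ • strainBA φα φβ G nh a = G) := by
  have hs : φα + φβ ≠ 0 := by positivity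
  refine ⟨fun a => ⟨fun hmin => ?_, fun heq b => ?_⟩, fun a => ?_, fun a => ?_⟩
  · set v := (Cβ (strainBA φα φβ G nh a - εβB)).mulVec nh
      - (Cα (strainAB φα φβ G nh a - εαB)).mulVec nh with hv
    obtain ⟨k, Q, hk, hQ, hE⟩ := aux_energy φα φβ hφα hφβ G nh Cα Cβ hCα hCβ εαB εβB a v
    have hvv : v ⬝ᵥ v = 0 := by
      have hnn : 0 ≤ v ⬝ᵥ v := Finset.sum_nonneg fun i _ => mul_self_nonneg (v i)
      by_contra hne
      have hpos : 0 < k * (v ⬝ᵥ v) := mul_pos hk (lt_of_le_of_ne hnn (Ne.symm hne))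
      set L := k * (v ⬝ᵥ v) with hL
      have h1 := hmin (a + (-(L / (Q + 1))) • v)
      rw [hE, ← hv] at h1
      have h2 : -(L / (Q + 1)) * k * (v ⬝ᵥ v) + (-(L / (Q + 1))) ^ 2 * Q
          = - (L ^ 2 / (Q + 1) ^ 2) := by
        rw [mul_assoc, ← hL]
        field_simp
        ring
      have h3 : 0 < L ^ 2 / (Q + 1) ^ 2 := by positivity
      linarith
    have hv0 : v = 0 := dotProduct_self_eq_zero.mp hvv
    exact (sub_eq_zero.mp (hv ▸ hv0)).symm
  · obtain ⟨k, Q, hk, hQ, hE⟩ :=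
      aux_energy φα φβ hφα hφβ G nh Cα Cβ hCα hCβ εαB εβB a (b - a)
    have h1 := hE 1
    rw [heq, sub_self, dotProduct_zero, one_smul, add_sub_cancel] at h1
    linarith
  · ext i j
    simp only [strainAB, strainBA, Matrix.sub_apply, Matrix.add_apply,
      Matrix.smul_apply, smul_eq_mul]
    field_simp
    ring
  · ext i j
    simp only [strainAB, strainBA, Matrix.sub_apply, Matrix.add_apply,
      Matrix.smul_apply, smul_eq_mul]
    field_simp
    ring
end
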